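/- For all integers k ≥ 3 and M ≥ 1, there exists an adaptive strategy over probing strings that identifies the members of D_L in at most (M+1)(k−1) interactions: starting from the probing string [a_1, a_2] and repeatedly appending the unique allowed token returned by g_m until ∅ is returned, the strategy recovers s_m, which uniquely determines m; the number of evaluations of g_m is linear in M·k. -/

import Mathlib

/-- The word `a_1^n a_2^{n + m_2} ⋯ a_k^{n + m_k}` over the alphabet `Fin k`
(where, for a valid parameter tuple, `m` vanishes on the first token). -/
def word (k : ℕ) (m : Fin k → ℕ) (n : ℕ) : List (Fin k) :=
  (List.finRange k).flatMap fun i => List.replicate (n + m i) i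

/-- A valid parameter tuple `(m_2, …, m_k)`: the entry of the first token is `0`
and every other entry lies in `{1, …, M}`. -/
def validParam (k M : ℕ) (m : Fin k → ℕ) : Prop :=
  (∀ i : Fin k, (i : ℕ) = 0 → m i = 0) ∧
  (∀ i : Fin k, 1 ≤ (i : ℕ) → 1 ≤ m i ∧ m i ≤ M)

/-- The language `L_m = { a_1^n a_2^{n+m_2} ⋯ a_k^{n+m_k} | n ≥ 1 }`. -/
def lang (k : ℕ) (m : Fin k → ℕ) : Set (List (Fin k)) :=
  {w | ∃ n, 1 ≤ n ∧ w = word k m n}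

/-- The generative function `g_m`, mapping a string `s` to the set of tokens `t`
such that `s ++ [t]` is a prefix of some word of `L_m` (so `g_m s = ∅` when `s`
admits no valid continuation). -/
noncomputable def gen (k : ℕ) (m : Fin k → ℕ) (s : List (Fin k)) : Finset (Fin k) :=
  @Finset.filter _ (fun t => ∃ n, 1 ≤ n ∧ (s ++ [t]) <+: word k m n)
    (Classical.decPred _) Finset.univ

/-- Answer traces of an adaptive strategy `q` over probing strings interacting with
`g : List (Fin k) → Finset (Fin k)`: `T_g(0) = []`,
`T_g(j+1) = T_g(j) ++ [g (q (T_g(j)))]`. -/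
def traceS (k : ℕ) (q : List (Finset (Fin k)) → List (Fin k))
    (g : List (Fin k) → Finset (Fin k)) : ℕ → List (Finset (Fin k))
  | 0 => []
  | j + 1 => traceS k q g j ++ [g (q (traceS k q g j))]

/-!
Only the word `s_m` with `n = 1` begins with `a_1 a_2`, so once the probing string is a prefix of
`s_m` of length at least two, its valid continuations are exactly those inside `s_m`: the answer is
the singleton of the next letter, or `∅` when `s_m` is exhausted. Appending the answers to
`[a_1, a_2]` therefore spells out `s_m`, of length at most `(M + 1) (k - 1) + 1`, and the letter
counts of `s_m` are `1 + m_i`.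
-/

theorem take_append_singleton_prefix_iff {α : Type*} {l : List α} {j : ℕ} {a : α} :
    l.take j ++ [a] <+: l ↔ l[j]? = some a := by
  constructor
  · intro h
    have hj : (l.take j).length = j := by
      have := h.length_le
      simp only [List.length_append, List.length_take, List.length_singleton] at this ⊢
      omega
    obtain ⟨r, hr⟩ := h
    rw [← hr, List.append_assoc, List.getElem?_append_right hj.le, hj]
    simp
  · intro h
    have hstep : l.take (j + 1) = l.take j ++ [a] := by rw [List.take_add_one, h]; rfl
    exact hstep ▸ List.take_prefix _ _

section Word

variable {k : ℕ}

theorem count_word (m : Fin k → ℕ) (n : ℕ) (i : Fin k) : (word k m n).count i = n + m i := by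
  rw [word, List.count_flatMap, ← List.ofFn_eq_map, List.sum_ofFn]
  simp [List.count_replicate]

theorem word_injective (n : ℕ) : Function.Injective fun m : Fin k → ℕ => word k m n := by
  intro m m' h
  funext i
  have hcount := congrArg (List.count i) h
  simpa only [count_word, Nat.add_left_cancel_iff] using hcount

theorem length_word (m : Fin k → ℕ) (n : ℕ) : (word k m n).length = ∑ i, (n + m i) := by
  rw [word, List.length_flatMap, ← List.ofFn_eq_map, List.sum_ofFn]
  simp only [List.length_replicate]

theorem length_word_le {M : ℕ} {m : Fin (k + 1) → ℕ} (h0 : m 0 = 0) (hM : ∀ i, m i ≤ M) (n : ℕ) :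
    (word (k + 1) m n).length ≤ n + k * (n + M) := by
  calc (word (k + 1) m n).length
      = n + ∑ i : Fin k, (n + m i.succ) := by rw [length_word, Fin.sum_univ_succ, h0, add_zero]
    _ ≤ n + ∑ _i : Fin k, (n + M) := by gcongr; exact hM _
    _ = n + k * (n + M) := by simp

theorem word_succ (m : Fin (k + 1) → ℕ) (n : ℕ) :
    word (k + 1) m n =
      List.replicate (n + m 0) 0 ++ (word k (fun i => m i.succ) n).map Fin.succ := by
  simp only [word, List.finRange_succ, List.flatMap_cons, List.flatMap_map, List.map_flatMap,
    List.map_replicate]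

theorem zero_one_prefix_word_iff {m : Fin (k + 2) → ℕ} (h0 : m 0 = 0) {n : ℕ} :
    [0, 1] <+: word (k + 2) m n ↔ n = 1 := by
  constructor
  · intro h
    have hn : n ≠ 0 := by
      have hmem : 0 ∈ word (k + 2) m n := h.subset (by simp)
      simpa only [count_word, h0, add_zero, pos_iff_ne_zero] using List.count_pos_iff.2 hmem
    obtain ⟨n, rfl⟩ := Nat.exists_eq_succ_of_ne_zero hn
    cases n with
    | zero => rfl
    | succ n => simp [word_succ, h0, List.replicate_succ] at h
  · rintro rfl
    simp [word_succ, h0, Nat.add_comm 1, List.replicate_succ]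

end Word

theorem mem_gen {k : ℕ} {m : Fin k → ℕ} {s : List (Fin k)} {t : Fin k} :
    t ∈ gen k m s ↔ ∃ n, 1 ≤ n ∧ s ++ [t] <+: word k m n := by
  simp [gen]

theorem gen_take_word_one {k : ℕ} {m : Fin (k + 2) → ℕ} (h0 : m 0 = 0) {j : ℕ} (hj : 2 ≤ j) :
    gen (k + 2) m ((word (k + 2) m 1).take j) = (word (k + 2) m 1)[j]?.toFinset := by
  have hstart : [0, 1] <+: (word (k + 2) m 1).take j :=
    List.prefix_take_iff.2 ⟨(zero_one_prefix_word_iff h0).2 rfl, hj⟩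
  ext t
  rw [mem_gen, Option.mem_toFinset, Option.mem_def, ← take_append_singleton_prefix_iff]
  constructor
  · rintro ⟨n, -, hn⟩
    obtain rfl : n = 1 :=
      (zero_one_prefix_word_iff h0).1 ((hstart.trans (List.prefix_append _ _)).trans hn)
    exact hn
  · exact fun h => ⟨1, le_rfl, h⟩

section Greedy

variable {k : ℕ}

/-- The strategy that starts from the probing string `p` and keeps appending the returned token.
An answer is a set, so it is appended as a list: `∅` adds nothing, a singleton adds its element, and
the arbitrary order of larger answers is never met in the interactions considered here. -/
noncomputable def greedyQuery (p : List (Fin k)) (T : List (Finset (Fin k))) : List (Fin k) :=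
  p ++ T.flatMap Finset.toList

theorem greedyQuery_append_singleton (p : List (Fin k)) (T : List (Finset (Fin k)))
    (A : Finset (Fin k)) : greedyQuery p (T ++ [A]) = greedyQuery p T ++ A.toList := by
  simp [greedyQuery]

theorem greedyQuery_traceS {p w : List (Fin k)} {g : List (Fin k) → Finset (Fin k)}
    (hp : p <+: w) (hg : ∀ j, p.length ≤ j → g (w.take j) = w[j]?.toFinset) (j : ℕ) :
    greedyQuery p (traceS k (greedyQuery p) g j) = w.take (p.length + j) := by
  induction j with
  | zero => simpa [traceS, greedyQuery] using List.prefix_iff_eq_take.1 hp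
  | succ j ih =>
    have hanswer : (g (w.take (p.length + j))).toList = w[p.length + j]?.toList := by
      rw [hg _ (Nat.le_add_right _ _)]
      cases w[p.length + j]? <;> simp
    rw [traceS, greedyQuery_append_singleton, ih, hanswer, ← add_assoc, List.take_add_one]

theorem greedyQuery_traceS_gen {m : Fin (k + 2) → ℕ} (h0 : m 0 = 0) {j : ℕ}
    (hj : (word (k + 2) m 1).length ≤ 2 + j) :
    greedyQuery [0, 1] (traceS (k + 2) (greedyQuery [0, 1]) (gen (k + 2) m) j) =
      word (k + 2) m 1 := by
  rw [greedyQuery_traceS ((zero_one_prefix_word_iff h0).2 rfl) fun _ => gen_take_word_one h0]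
  exact List.take_of_length_le hj

end Greedy

theorem validParam.le {k M : ℕ} {m : Fin k → ℕ} (hm : validParam k M m) (i : Fin k) :
    m i ≤ M := by
  rcases Nat.eq_zero_or_pos (i : ℕ) with hi | hi
  · exact (hm.1 i hi).trans_le (Nat.zero_le M)
  · exact (hm.2 i hi).2

theorem interactive_identifies_languages_general (k M : ℕ) :
    Set.InjOn (fun g => traceS (k + 2) (greedyQuery [0, 1]) g ((M + 1) * (k + 1)))
      (gen (k + 2) '' {m | m 0 = 0 ∧ ∀ i, m i ≤ M}) := by
  have recover {m : Fin (k + 2) → ℕ} (h0 : m 0 = 0) (hM : ∀ i, m i ≤ M) :=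
    greedyQuery_traceS_gen h0 (j := (M + 1) * (k + 1))
      ((length_word_le h0 hM 1).trans (by linarith))
  rintro _ ⟨m, ⟨h0, hM⟩, rfl⟩ _ ⟨m', ⟨h0', hM'⟩, rfl⟩ htrace
  have hword : word (k + 2) m 1 = word (k + 2) m' 1 := by
    rw [← recover h0 hM, ← recover h0' hM']
    exact congrArg (greedyQuery [0, 1]) htrace
  rw [word_injective 1 hword]

/-- For all integers `k ≥ 3` and `M ≥ 1`, there exists an adaptive
strategy over probing strings that identifies the members of
`D_L = { g_m | m ∈ {1,…,M}^{k-1} }` in at most `(M+1)(k-1)` interactions: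
the map `g ↦ T_g(j)` is injective on `D_L` for some `j ≤ (M+1)(k-1)`. -/
theorem interactive_identifies_languages (k M : ℕ) (hk : 3 ≤ k) (hM : 1 ≤ M) :
    ∃ (q : List (Finset (Fin k)) → List (Fin k)) (j : ℕ),
      j ≤ (M + 1) * (k - 1) ∧
      Set.InjOn (fun g => traceS k q g j) {g | ∃ m, validParam k M m ∧ g = gen k m} := by
  obtain ⟨k, rfl⟩ := Nat.exists_eq_add_of_le' (Nat.le_of_succ_le hk)
  refine ⟨greedyQuery [0, 1], _, le_rfl, (interactive_identifies_languages_general k M).mono ?_⟩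
  rintro _ ⟨m, hm, rfl⟩
  exact ⟨m, ⟨hm.1 0 rfl, hm.le⟩, rfl⟩
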